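/- arXiv:2407.15536 — 3 statements merged into one kernel-verified Lean document; each statement's English description precedes it below -/
import Mathlib

section
/- Let u, κ, σ, ρ be real numbers and write i for the imaginary unit. Suppose d : ℝ → ℂ is differentiable at ρ, satisfies d(y)² = (κ − iyσu)² + σ²(iu + u²) for all y in a neighborhood of ρ, d(ρ) ≠ 0, and κ − iρσu + d(ρ) ≠ 0. Define g(y) = (κ − iyσu − d(y))/(κ − iyσu + d(y)). Then g is differentiable at ρ and its derivative at ρ equals 2iσu·g(ρ)/d(ρ). -/
open Complex

/-!
Write `a y = κ - I y σ u`, so that `d ^ 2 - a ^ 2` is constant. A continuous square root is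
differentiable wherever it is nonzero and its square is differentiable, so `d d' = a a'`. Hence
`(a - d)' = -(a' / d) (a - d)` and `(a + d)' = (a' / d) (a + d)`, and the logarithmic derivative of
`g = (a - d) / (a + d)` is `-2 a' / d`, where `a' = -I σ u`.
-/

section

open Filter Topology

variable {𝕜 𝕂 : Type*} [NontriviallyNormedField 𝕜] [NontriviallyNormedField 𝕂]
  [NormedAlgebra 𝕜 𝕂] {a d f h : 𝕜 → 𝕂} {a' b c p q : 𝕂} {x : 𝕜}

theorem hasDerivAt_of_hasDerivAt_sq [NeZero (2 : 𝕂)] (hd : ContinuousAt d x) (hdx : d x ≠ 0)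
    (hsq : HasDerivAt (fun y ↦ d y ^ 2) b x) : HasDerivAt d (b / (2 * d x)) x := by
  rw [hasDerivAt_iff_tendsto_slope] at hsq ⊢
  have hsum : ContinuousAt (fun y ↦ d y + d x) x := hd.add continuousAt_const
  have hsum_ne : d x + d x ≠ 0 := by
    rw [← two_mul]
    exact mul_ne_zero two_ne_zero hdx
  have hslope : (fun y ↦ slope (fun z ↦ d z ^ 2) x y / (d y + d x)) =ᶠ[𝓝[≠] x] slope d x := by
    filter_upwards [(hsum.eventually_ne hsum_ne).filter_mono nhdsWithin_le_nhds] with y hy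
    rw [slope_def_module, slope_def_module, sq_sub_sq, mul_comm, ← smul_mul_assoc,
      mul_div_cancel_right₀ _ hy]
  rw [two_mul]
  exact (hsq.div (hsum.tendsto.mono_left nhdsWithin_le_nhds) hsum_ne).congr' hslope

theorem hasDerivAt_of_sq_eq_sq_add_const [NeZero (2 : 𝕂)] (ha : HasDerivAt a a' x)
    (hd : ContinuousAt d x) (hdx : d x ≠ 0) (hsq : ∀ᶠ y in 𝓝 x, d y ^ 2 = a y ^ 2 + c) :
    HasDerivAt d (a x * a' / d x) x := by
  have hd_sq : HasDerivAt (fun y ↦ d y ^ 2) (2 * (a x * a')) x :=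
    (((ha.fun_pow 2).add_const c).congr_of_eventuallyEq hsq).congr_deriv (by simp [mul_assoc])
  exact (hasDerivAt_of_hasDerivAt_sq hd hdx hd_sq).congr_deriv
    (mul_div_mul_left _ _ two_ne_zero)

theorem hasDerivAt_div_of_hasDerivAt_mul_self (hf : HasDerivAt f (p * f x) x)
    (hh : HasDerivAt h (q * h x) x) (hhx : h x ≠ 0) :
    HasDerivAt (fun y ↦ f y / h y) ((p - q) * (f x / h x)) x :=
  (hf.fun_div hh hhx).congr_deriv (by field_simp)

theorem hasDerivAt_sub_div_add_of_sq_eq_sq_add_const [NeZero (2 : 𝕂)] (ha : HasDerivAt a a' x)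
    (hd : ContinuousAt d x) (hdx : d x ≠ 0) (hsq : ∀ᶠ y in 𝓝 x, d y ^ 2 = a y ^ 2 + c)
    (hadd : a x + d x ≠ 0) :
    HasDerivAt (fun y ↦ (a y - d y) / (a y + d y))
      (-2 * a' / d x * ((a x - d x) / (a x + d x))) x := by
  have hd' := hasDerivAt_of_sq_eq_sq_add_const ha hd hdx hsq
  have hsub_deriv : HasDerivAt (fun y ↦ a y - d y) (-(a' / d x) * (a x - d x)) x :=
    (ha.fun_sub hd').congr_deriv (by field_simp; ring)
  have hadd_deriv : HasDerivAt (fun y ↦ a y + d y) (a' / d x * (a x + d x)) x :=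
    (ha.fun_add hd').congr_deriv (by field_simp; ring)
  exact (hasDerivAt_div_of_hasDerivAt_mul_self hsub_deriv hadd_deriv hadd).congr_deriv (by ring)

end

theorem hasDerivAt_const_sub_I_mul_ofReal (u κ σ : ℂ) (ρ : ℝ) :
    HasDerivAt (fun y : ℝ ↦ κ - I * y * σ * u) (-(I * σ * u)) ρ := by
  simpa using ((((hasDerivAt_id ρ).ofReal_comp.const_mul I).mul_const σ).mul_const u).const_sub κ

theorem heston_deriv_g_rho_general (u κ σ : ℂ) (ρ : ℝ) (d g : ℝ → ℂ)
    (hcont : ContinuousAt d ρ)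
    (hsq : ∀ᶠ y : ℝ in nhds ρ, d y ^ 2 = (κ - I * y * σ * u) ^ 2 + σ ^ 2 * (I * u + u ^ 2))
    (hne : d ρ ≠ 0)
    (hne2 : κ - I * ρ * σ * u + d ρ ≠ 0)
    (hg : ∀ y : ℝ, g y = (κ - I * y * σ * u - d y) / (κ - I * y * σ * u + d y)) :
    HasDerivAt g (2 * I * σ * u * g ρ / d ρ) ρ := by
  have hquot := hasDerivAt_sub_div_add_of_sq_eq_sq_add_const
    (hasDerivAt_const_sub_I_mul_ofReal u κ σ ρ) hcont hne hsq hne2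
  rw [← funext hg, ← hg ρ] at hquot
  exact hquot.congr_deriv (by ring)

theorem heston_deriv_g_rho (u κ σ ρ : ℝ) (d g : ℝ → ℂ)
    (hdiff : DifferentiableAt ℝ d ρ)
    (hsq : ∀ᶠ y in nhds ρ,
      d y ^ 2 = ((κ : ℂ) - I * y * σ * u) ^ 2 + σ ^ 2 * (I * u + u ^ 2))
    (hne : d ρ ≠ 0)
    (hne2 : (κ : ℂ) - I * ρ * σ * u + d ρ ≠ 0)
    (hg : ∀ y : ℝ, g y = ((κ : ℂ) - I * y * σ * u - d y) / ((κ : ℂ) - I * y * σ * u + d y)) :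
    HasDerivAt g (2 * I * σ * u * g ρ / d ρ) ρ :=
  heston_deriv_g_rho_general u κ σ ρ d g hdiff.continuousAt hsq hne hne2 hg
end

section
/- Let u, κ, ρ, σ be real numbers and write i for the imaginary unit. Suppose d : ℝ → ℂ is differentiable at σ, satisfies d(s)² = (κ − iρsu)² + s²(iu + u²) for all s in a neighborhood of σ, d(σ) ≠ 0, and κ − iρσu + d(σ) ≠ 0. Define g(s) = (κ − iρsu − d(s))/(κ − iρsu + d(s)). Then g is differentiable at σ and its derivative at σ equals −2κσ(iu + u²)/(d(σ)·(κ − iρσu + d(σ))²). -/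
open Complex

/-!
Write `b = κ - β s` and `d² = b² + s² c`, with `β = iρu` and `c = iu + u²`. Differentiating
`(b - d) / (b + d)` gives `2 (b' d - b d') / (b + d)²`. Multiplying the numerator by `d` removes
`d'`, because `2 d d' = (d²)'`: for any `d² = b² + r` it becomes `2 b' r - b r'`. With `b` affine
and `r = s² c` the `β` terms cancel, leaving `-2 κ s c`.
-/

open Topology

section Derivative

variable {𝕜 𝕜' : Type*} [NontriviallyNormedField 𝕜] [NontriviallyNormedField 𝕜']
  [NormedAlgebra 𝕜 𝕜'] {b d r f : 𝕜 → 𝕜'} {b' d' r' f' : 𝕜'} {x : 𝕜}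

theorem hasDerivAt_sub_div_add (hb : HasDerivAt b b' x) (hd : HasDerivAt d d' x)
    (hbd : b x + d x ≠ 0) :
    HasDerivAt (fun s => (b s - d s) / (b s + d s))
      (2 * (b' * d x - b x * d') / (b x + d x) ^ 2) x :=
  ((hb.fun_sub hd).fun_div (hb.fun_add hd) hbd).congr_deriv (by ring)

theorem two_mul_mul_deriv_eq_of_sq_eventuallyEq (hd : HasDerivAt d d' x) (hf : HasDerivAt f f' x)
    (hsq : ∀ᶠ s in 𝓝 x, d s ^ 2 = f s) : 2 * d x * d' = f' := by
  have hd_sq : HasDerivAt (fun s => d s ^ 2) (2 * d x * d') x := by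
    simpa using hd.fun_pow 2
  exact hd_sq.unique (hf.congr_of_eventuallyEq hsq)

theorem hasDerivAt_sub_div_add_of_sq_eventuallyEq (hb : HasDerivAt b b' x)
    (hr : HasDerivAt r r' x) (hd : DifferentiableAt 𝕜 d x)
    (hsq : ∀ᶠ s in 𝓝 x, d s ^ 2 = b s ^ 2 + r s) (hdx : d x ≠ 0) (hbd : b x + d x ≠ 0) :
    HasDerivAt (fun s => (b s - d s) / (b s + d s))
      ((2 * b' * r x - b x * r') / (d x * (b x + d x) ^ 2)) x := by
  have hsq_deriv : 2 * d x * deriv d x = 2 * b x * b' + r' :=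
    two_mul_mul_deriv_eq_of_sq_eventuallyEq hd.hasDerivAt
      (((hb.fun_pow 2).fun_add hr).congr_deriv (by simp)) hsq
  have hnum : 2 * (b' * d x - b x * deriv d x) * d x = 2 * b' * r x - b x * r' := by
    linear_combination 2 * b' * hsq.self_of_nhds - b x * hsq_deriv
  refine (hasDerivAt_sub_div_add hb hd.hasDerivAt hbd).congr_deriv ?_
  rw [← hnum]
  field_simp

theorem heston_deriv_g_sigma_general (κ β c : 𝕜') (hd : DifferentiableAt 𝕜 d x)
    (hsq : ∀ᶠ s in 𝓝 x,
      d s ^ 2 = (κ - β * algebraMap 𝕜 𝕜' s) ^ 2 + algebraMap 𝕜 𝕜' s ^ 2 * c)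
    (hdx : d x ≠ 0) (hbd : κ - β * algebraMap 𝕜 𝕜' x + d x ≠ 0) :
    HasDerivAt
      (fun s => (κ - β * algebraMap 𝕜 𝕜' s - d s) / (κ - β * algebraMap 𝕜 𝕜' s + d s))
      (-2 * κ * algebraMap 𝕜 𝕜' x * c / (d x * (κ - β * algebraMap 𝕜 𝕜' x + d x) ^ 2)) x := by
  have hid : HasDerivAt (algebraMap 𝕜 𝕜') 1 x := by
    simpa using! (Algebra.linearMap 𝕜 𝕜').hasDerivAt
  have hb : HasDerivAt (fun s => κ - β * algebraMap 𝕜 𝕜' s) (-β) x := by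
    simpa using (hid.const_mul β).const_sub κ
  have hr : HasDerivAt (fun s => algebraMap 𝕜 𝕜' s ^ 2 * c) (2 * algebraMap 𝕜 𝕜' x * c) x := by
    simpa using (hid.fun_pow 2).mul_const c
  exact (hasDerivAt_sub_div_add_of_sq_eventuallyEq hb hr hd hsq hdx hbd).congr_deriv (by ring)

end Derivative

theorem heston_deriv_g_sigma (u κ ρ σ : ℝ) (d g : ℝ → ℂ)
    (hdiff : DifferentiableAt ℝ d σ)
    (hsq : ∀ᶠ s in nhds σ,
      d s ^ 2 = ((κ : ℂ) - I * ρ * s * u) ^ 2 + s ^ 2 * (I * u + u ^ 2))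
    (hne : d σ ≠ 0)
    (hne2 : (κ : ℂ) - I * ρ * σ * u + d σ ≠ 0)
    (hg : ∀ s : ℝ, g s = ((κ : ℂ) - I * ρ * s * u - d s) / ((κ : ℂ) - I * ρ * s * u + d s)) :
    HasDerivAt g
      (-2 * κ * σ * (I * u + u ^ 2) / (d σ * ((κ : ℂ) - I * ρ * σ * u + d σ) ^ 2)) σ := by
  simp only [mul_right_comm (I * (ρ : ℂ)) _ (u : ℂ)] at hsq hne2 hg ⊢
  rw [funext hg]
  exact heston_deriv_g_sigma_general (κ : ℂ) (I * ρ * u) (I * u + u ^ 2) hdiff hsq hne hne2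
end

section
/- Let u, ρ, σ, κ, τ be real numbers and write i for the imaginary unit. Suppose d : ℝ → ℂ is differentiable at κ, satisfies d(x)² = (x − iρσu)² + σ²(iu + u²) for all x in a neighborhood of κ, with d(κ) ≠ 0 and κ − iρσu + d(κ) ≠ 0. Define g(x) = (x − iρσu − d(x))/(x − iρσu + d(x)), a(x) = exp(−τ d(x)), and A(x) = (1 − a(x))/(1 − g(x)a(x)), and assume 1 − g(κ)a(κ) ≠ 0. Then A is differentiable at κ and its derivative at κ equals (τ a(κ)(κ − iρσu)(1 − g(κ)) − 2 a(κ) g(κ)(1 − a(κ))) / (d(κ)(1 − g(κ)a(κ))²). -/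
open Complex

/-!
Write `b = κ - iρσu`, so that `d² = b² + c` with `c` independent of `κ`. Differentiating gives
`d' = b b' / d`, and this makes the logarithmic derivative of `g = (b - d) / (b + d)` collapse to
`-2 b' / d`, while that of `a = exp (-τ d)` is `-τ b b' / d`. The derivative of
`A = (1 - a) / (1 - g a)` is `(a g' (1 - a) - a' (1 - g)) / (1 - g a)²`, in which the factor
`b' / d` is common to both terms.
-/

section NontriviallyNormedField

variable {𝕜 F : Type*} [NontriviallyNormedField 𝕜] [NontriviallyNormedField F]
  [NormedAlgebra 𝕜 F] {x : 𝕜}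

/- Factoring `s y ^ 2 - s x ^ 2` turns the slope of `f` into that of `s` times `s y + s x`, whose
limit `2 * s x` is nonzero. -/
theorem hasDerivAt_of_sq_eventuallyEq [NeZero (2 : F)] {s f : 𝕜 → F} {f' : F}
    (hs : ContinuousAt s x) (hsq : ∀ᶠ y in nhds x, s y ^ 2 = f y) (hf : HasDerivAt f f' x)
    (hne : s x ≠ 0) : HasDerivAt s (f' / (2 * s x)) x := by
  have sum_ne : s x + s x ≠ 0 := by
    rw [← two_mul]
    exact mul_ne_zero two_ne_zero hne
  have sum_tendsto : Filter.Tendsto (fun y ↦ s y + s x) (nhds x) (nhds (s x + s x)) :=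
    hs.add_const (s x)
  have slope_eq : ∀ᶠ y in nhds x, slope f x y * (s y + s x)⁻¹ = slope s x y := by
    filter_upwards [hsq, sum_tendsto.eventually_ne sum_ne] with y hy sum_y_ne
    rw [slope_def_module, slope_def_module, ← hy, ← hsq.self_of_nhds, smul_mul_assoc, sq_sub_sq,
      mul_comm (s y + s x), mul_inv_cancel_right₀ sum_y_ne]
  rw [hasDerivAt_iff_tendsto_slope] at hf ⊢
  rw [two_mul, div_eq_mul_inv]
  exact (hf.mul ((sum_tendsto.mono_left nhdsWithin_le_nhds).inv₀ sum_ne)).congr'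
    (slope_eq.filter_mono nhdsWithin_le_nhds)

theorem hasDerivAt_of_sq_eventuallyEq_sq_add_const [NeZero (2 : F)] {b d : 𝕜 → F} {b' c : F}
    (hd : ContinuousAt d x) (hsq : ∀ᶠ y in nhds x, d y ^ 2 = b y ^ 2 + c)
    (hb : HasDerivAt b b' x) (hne : d x ≠ 0) : HasDerivAt d (b x * b' / d x) x := by
  have radicand_deriv : HasDerivAt (fun y ↦ b y ^ 2 + c) (2 * (b x * b')) x := by
    simpa [mul_assoc] using (hb.fun_pow 2).add_const c
  exact (hasDerivAt_of_sq_eventuallyEq hd hsq radicand_deriv hne).congr_deriv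
    (mul_div_mul_left _ _ two_ne_zero)

theorem hasDerivAt_sub_div_add_of_hasDerivAt_mul_div {b d : 𝕜 → F} {b' : F}
    (hb : HasDerivAt b b' x) (hd : HasDerivAt d (b x * b' / d x) x) (hne : d x ≠ 0)
    (hadd : b x + d x ≠ 0) :
    HasDerivAt (fun y ↦ (b y - d y) / (b y + d y))
      (-2 * ((b x - d x) / (b x + d x)) * b' / d x) x := by
  refine ((hb.fun_sub hd).fun_div (hb.fun_add hd) hadd).congr_deriv ?_
  field_simp
  ring

theorem hasDerivAt_one_sub_div_one_sub_mul {g a : 𝕜 → F} {g' a' : F}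
    (hg : HasDerivAt g g' x) (ha : HasDerivAt a a' x) (hne : 1 - g x * a x ≠ 0) :
    HasDerivAt (fun y ↦ (1 - a y) / (1 - g y * a y))
      ((a x * g' * (1 - a x) - a' * (1 - g x)) / (1 - g x * a x) ^ 2) x := by
  refine ((ha.const_sub 1).fun_div ((hg.fun_mul ha).const_sub 1) hne).congr_deriv ?_
  ring

end NontriviallyNormedField

theorem heston_deriv_A_kappa_general {𝕜 : Type*} [NontriviallyNormedField 𝕜] [NormedAlgebra 𝕜 ℂ]
    {κ : 𝕜} {b d g a A : 𝕜 → ℂ} {b' c τ : ℂ} (hb : HasDerivAt b b' κ)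
    (hcont : ContinuousAt d κ) (hsq : ∀ᶠ x in nhds κ, d x ^ 2 = b x ^ 2 + c)
    (hne : d κ ≠ 0) (hne2 : b κ + d κ ≠ 0)
    (hg : ∀ x, g x = (b x - d x) / (b x + d x))
    (ha : ∀ x, a x = exp (-(τ * d x)))
    (hA : ∀ x, A x = (1 - a x) / (1 - g x * a x))
    (hne3 : 1 - g κ * a κ ≠ 0) :
    HasDerivAt A
      (b' * (τ * a κ * b κ * (1 - g κ) - 2 * a κ * g κ * (1 - a κ)) /
        (d κ * (1 - g κ * a κ) ^ 2)) κ := by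
  have d_deriv : HasDerivAt d (b κ * b' / d κ) κ :=
    hasDerivAt_of_sq_eventuallyEq_sq_add_const hcont hsq hb hne
  have g_deriv : HasDerivAt g (-2 * g κ * b' / d κ) κ := by
    rw [hg κ, funext hg]
    exact hasDerivAt_sub_div_add_of_hasDerivAt_mul_div hb d_deriv hne hne2
  have a_deriv : HasDerivAt a (a κ * -(τ * (b κ * b' / d κ))) κ := by
    rw [ha κ, funext ha]
    exact (d_deriv.const_mul τ).fun_neg.cexp
  rw [funext hA]
  refine (hasDerivAt_one_sub_div_one_sub_mul g_deriv a_deriv hne3).congr_deriv ?_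
  field_simp
  ring

theorem heston_deriv_A_kappa (u ρ σ κ τ : ℝ) (d g a A : ℝ → ℂ)
    (hdiff : DifferentiableAt ℝ d κ)
    (hsq : ∀ᶠ x in nhds κ,
      d x ^ 2 = ((x : ℂ) - I * ρ * σ * u) ^ 2 + σ ^ 2 * (I * u + u ^ 2))
    (hne : d κ ≠ 0)
    (hne2 : (κ : ℂ) - I * ρ * σ * u + d κ ≠ 0)
    (hg : ∀ x : ℝ, g x = ((x : ℂ) - I * ρ * σ * u - d x) / ((x : ℂ) - I * ρ * σ * u + d x))
    (ha : ∀ x : ℝ, a x = Complex.exp (-(τ * d x)))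
    (hA : ∀ x : ℝ, A x = (1 - a x) / (1 - g x * a x))
    (hne3 : 1 - g κ * a κ ≠ 0) :
    HasDerivAt A
      ((τ * a κ * ((κ : ℂ) - I * ρ * σ * u) * (1 - g κ) - 2 * a κ * g κ * (1 - a κ)) /
        (d κ * (1 - g κ * a κ) ^ 2)) κ := by
  have hb : HasDerivAt (fun x : ℝ ↦ (x : ℂ) - I * ρ * σ * u) 1 κ :=
    (hasDerivAt_id κ).ofReal_comp.sub_const _
  simpa only [one_mul] using
    heston_deriv_A_kappa_general hb hdiff.continuousAt hsq hne hne2 hg ha hA hne3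
end
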